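/- (Lemma 2(b)) Under the augmented push-sum dynamics with the ergodicity hypothesis, for every player i ∈ {1,…,n}, lim_{k→∞} ‖z_i(k+1) − x̄(k)‖ = 0. -/

import Mathlib

open Filter Topology

/-- Backward product `Φ(k,t) = A(k) A(k−1) ⋯ A(k−t)`. -/
noncomputable def backProd {N : ℕ} (A : ℕ → Matrix (Fin N) (Fin N) ℝ) (k t : ℕ) :
    Matrix (Fin N) (Fin N) ℝ :=
  ((List.range (t + 1)).map fun s => A (k - s)).prod

/-!
Subtracting the rank-one limit `φ(k) 𝟙ᵀ` from the unrolled recursion of `v` leaves a convolution of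
the summable mixing rate with the past increments of `x`, because the columns of `A(k)` sum to one
and hence `∑ⱼ vⱼ(k) = ∑ᵢ xᵢ(k)`. Likewise `y(k+1)` is close to `n φ(k)`, so the unknown `φ(k)`
cancels in the ratio `w / y`, and the tracking error is bounded by this convolution plus a multiple
of the mixing rate. Inserting the crude bound on the increments given by the boundedness of the
actions shows that the estimates are bounded. Then `F` is bounded along the trajectory, so the
increments vanish with the step sizes, and the same convolution tends to zero.
-/

section Convolution

variable {c D : ℕ → ℝ}

lemma sum_range_mul_reflect_le {C : ℝ} (hc : Summable c) (hc0 : ∀ s, 0 ≤ c s) (hD : ∀ k, D k ≤ C)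
    (hC : 0 ≤ C) (k : ℕ) : ∑ s ∈ Finset.range k, c s * D (k - 1 - s) ≤ (∑' s, c s) * C :=
  calc ∑ s ∈ Finset.range k, c s * D (k - 1 - s)
      ≤ ∑ s ∈ Finset.range k, c s * C := by gcongr with s; exacts [hc0 s, hD _]
    _ = (∑ s ∈ Finset.range k, c s) * C := (Finset.sum_mul ..).symm
    _ ≤ (∑' s, c s) * C := by gcongr; exact hc.sum_le_tsum _ fun s _ => hc0 s

lemma tendsto_sum_range_mul_reflect_zero (hc : Summable c) (hD : Tendsto D atTop (𝓝 0)) :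
    Tendsto (fun k => ∑ s ∈ Finset.range k, c s * D (k - 1 - s)) atTop (𝓝 0) := by
  obtain ⟨C, hC⟩ := (Metric.isBounded_range_of_tendsto D hD).exists_norm_le
  have hDC (k : ℕ) : ‖D k‖ ≤ C := hC _ ⟨k, rfl⟩
  let f (k s : ℕ) : ℝ := if s < k then c s * D (k - 1 - s) else 0
  have hf_lim (s : ℕ) : Tendsto (f · s) atTop (𝓝 0) := by
    have hsub : Tendsto (fun k : ℕ => k - 1 - s) atTop atTop :=
      (tendsto_sub_atTop_nat s).comp (tendsto_sub_atTop_nat 1)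
    have hmul : Tendsto (fun k => c s * D (k - 1 - s)) atTop (𝓝 0) := by
      simpa using (hD.comp hsub).const_mul (c s)
    exact hmul.congr' <| (eventually_gt_atTop s).mono fun k hk => (if_pos hk).symm
  have hf_le (k s : ℕ) : ‖f k s‖ ≤ ‖c s‖ * C := by
    by_cases hs : s < k
    · simpa only [f, if_pos hs, norm_mul] using mul_le_mul_of_nonneg_left (hDC _) (norm_nonneg _)
    · simpa only [f, if_neg hs, norm_zero] using
        mul_nonneg (norm_nonneg _) ((norm_nonneg _).trans (hDC 0))
  have hf_sum (k : ℕ) : ∑' s, f k s = ∑ s ∈ Finset.range k, c s * D (k - 1 - s) := by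
    rw [tsum_eq_sum (s := Finset.range k) fun s hs => if_neg (by simpa using hs)]
    exact Finset.sum_congr rfl fun s hs => if_pos (Finset.mem_range.1 hs)
  simpa only [hf_sum, tsum_zero] using
    tendsto_tsum_of_dominated_convergence (hc.norm.mul_right C) hf_lim
      (Eventually.of_forall hf_le)

end Convolution

section WeightedSums

open Matrix

lemma sum_smul_sum_smul {R M m n : Type*} [Semiring R] [AddCommMonoid M] [Module R M] [Fintype m]
    [Fintype n] (b : m → R) (A : Matrix m n R) (u : n → M) :
    ∑ j, b j • ∑ i, A j i • u i = ∑ i, (b ᵥ* A) i • u i := by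
  simp only [vecMul, dotProduct, Finset.smul_sum, Finset.sum_smul, smul_smul]
  exact Finset.sum_comm

lemma norm_sum_smul_le {R E ι : Type*} [SeminormedRing R] [SeminormedAddCommGroup E] [Module R E]
    [IsBoundedSMul R E] [Fintype ι] {b : ι → R} {C : ℝ} (hb : ∀ j, ‖b j‖ ≤ C) (u : ι → E) :
    ‖∑ j, b j • u j‖ ≤ C * ∑ j, ‖u j‖ := by
  rw [Finset.mul_sum]
  refine norm_sum_le_of_le _ fun j _ => (norm_smul_le _ _).trans ?_
  gcongr
  exact hb j

lemma sum_function_extend_zero {ι κ M : Type*} [Fintype ι] [Fintype κ] [AddCommMonoid M]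
    {e : ι → κ} (he : e.Injective) (f : ι → M) : ∑ j : κ, e.extend f 0 j = ∑ i, f i :=
  (Fintype.sum_of_injective e he f _ (Function.extend_apply' f _)
    fun i => (he.extend_apply f 0 i).symm).symm

lemma sum_norm_function_extend_zero {ι κ E : Type*} [Fintype ι] [Fintype κ]
    [SeminormedAddGroup E] {e : ι → κ} (he : e.Injective) (f : ι → E) :
    ∑ j : κ, ‖e.extend f 0 j‖ = ∑ i, ‖f i‖ := by
  rw [← sum_function_extend_zero he]
  refine Finset.sum_congr rfl fun j _ => ?_
  rw [Function.apply_extend norm]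
  congr 1
  exact funext fun _ => norm_zero

lemma eq_extend_castLE_zero {n N : ℕ} {M : Type*} [Zero M] (hnN : n ≤ N) {f : Fin n → M}
    {g : Fin N → M} (hf : ∀ i, g (Fin.castLE hnN i) = f i)
    (h0 : ∀ j : Fin N, n ≤ (j : ℕ) → g j = 0) : g = (Fin.castLE hnN).extend f 0 := by
  ext j
  rcases lt_or_ge (j : ℕ) n with hj | hj
  · exact (hf ⟨j, hj⟩).trans ((Fin.castLE_injective hnN).extend_apply f 0 ⟨j, hj⟩).symm
  · rw [h0 j hj, Function.extend_apply' _ _ _ (by rintro ⟨i, rfl⟩; exact hj.not_gt i.2),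
      Pi.zero_apply]

end WeightedSums

section PerturbedAveraging

open Matrix

variable {N : ℕ} {A : ℕ → Matrix (Fin N) (Fin N) ℝ}

lemma backProd_zero (k : ℕ) : backProd A k 0 = A k := by
  simp [backProd]

lemma backProd_succ (k t : ℕ) : backProd A k (t + 1) = backProd A k t * A (k - (t + 1)) := by
  rw [backProd, List.range_succ, List.map_append, List.prod_append, List.map_singleton,
    List.prod_singleton, backProd]

/-- The ergodicity hypothesis with a general rate: the backward products `Φ(k,t)` approach the
rank-one matrices `φ(k) 𝟙ᵀ` entrywise, with error at most `c t`. -/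
def ErgodicAtRate (A : ℕ → Matrix (Fin N) (Fin N) ℝ) (φ : ℕ → Fin N → ℝ) (c : ℕ → ℝ) : Prop :=
  ∀ k t, t ≤ k → ∀ i j, |backProd A k t i j - φ k i| ≤ c t

lemma ErgodicAtRate.rate_nonneg {φ : ℕ → Fin N → ℝ} {c : ℕ → ℝ} (herg : ErgodicAtRate A φ c)
    (j : Fin N) (t : ℕ) : 0 ≤ c t :=
  (abs_nonneg _).trans (herg t t le_rfl j j)

variable {E : Type*}

lemma sum_smul_averaging_succ [AddCommGroup E] [Module ℝ E] {v d : ℕ → Fin N → E}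
    (hv : ∀ k j, v (k + 1) j = ∑ m, A k j m • v k m + d k j) (b : Fin N → ℝ) (k : ℕ) :
    ∑ j, b j • v (k + 1) j = ∑ j, (b ᵥ* A k) j • v k j + ∑ j, b j • d k j := by
  simp only [hv, smul_add, Finset.sum_add_distrib, sum_smul_sum_smul]

lemma sum_averaging_succ [AddCommGroup E] [Module ℝ E] {v d : ℕ → Fin N → E}
    (hA : ∀ k j, ∑ i, A k i j = 1)
    (hv : ∀ k j, v (k + 1) j = ∑ m, A k j m • v k m + d k j) (k : ℕ) :
    ∑ j, v (k + 1) j = ∑ j, v k j + ∑ j, d k j := by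
  simpa [vecMul, dotProduct, hA] using sum_smul_averaging_succ hv 1 k

lemma sum_smul_averaging_sub_eq [AddCommGroup E] [Module ℝ E] {v d : ℕ → Fin N → E}
    (hA : ∀ k j, ∑ i, A k i j = 1)
    (hv : ∀ k j, v (k + 1) j = ∑ m, A k j m • v k m + d k j) (a : ℝ) (i : Fin N) {k t : ℕ}
    (ht : t ≤ k) :
    ∑ m, A k i m • v k m - a • ∑ j, v k j =
      ∑ j, (backProd A k t i j - a) • v (k - t) j +
        ∑ s ∈ Finset.range t, ∑ j, (backProd A k s i j - a) • d (k - 1 - s) j := by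
  induction t with
  | zero => simp [backProd_zero, sub_smul, Finset.sum_sub_distrib, Finset.smul_sum]
  | succ t ih =>
    -- Since the columns sum to one, the constant row `a 𝟙ᵀ` is fixed by right multiplication.
    have hrow : (fun j => backProd A k t i j - a) ᵥ* A (k - (t + 1)) =
        fun j => backProd A k (t + 1) i j - a := by
      ext j
      simp only [vecMul, dotProduct, sub_mul, Finset.sum_sub_distrib, ← Finset.mul_sum, hA,
        mul_one, backProd_succ, mul_apply]
    have hstep := sum_smul_averaging_succ hv (fun j => backProd A k t i j - a) (k - (t + 1))
    rw [hrow, show k - (t + 1) + 1 = k - t by lia] at hstep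
    rw [ih (by lia), hstep, Finset.sum_range_succ, show k - 1 - t = k - (t + 1) by lia]
    abel

lemma ErgodicAtRate.norm_averaging_sub_le [SeminormedAddCommGroup E] [NormedSpace ℝ E]
    {v d : ℕ → Fin N → E} {φ : ℕ → Fin N → ℝ} {c : ℕ → ℝ} (herg : ErgodicAtRate A φ c)
    (hA : ∀ k j, ∑ i, A k i j = 1)
    (hv : ∀ k j, v (k + 1) j = ∑ m, A k j m • v k m + d k j) (k : ℕ) (i : Fin N) :
    ‖∑ m, A k i m • v k m - φ k i • ∑ j, v k j‖ ≤
      c k * ∑ j, ‖v 0 j‖ + ∑ s ∈ Finset.range k, c s * ∑ j, ‖d (k - 1 - s) j‖ := by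
  rw [sum_smul_averaging_sub_eq hA hv _ _ le_rfl, Nat.sub_self]
  refine (norm_add_le _ _).trans (add_le_add ?_ (norm_sum_le_of_le _ fun s hs => ?_))
  · exact norm_sum_smul_le (herg k k le_rfl i) _
  · exact norm_sum_smul_le (herg k s (Finset.mem_range.1 hs).le i) _

end PerturbedAveraging

lemma sum_norm_le_card_mul {ι E : Type*} [Fintype ι] [Norm E] {x : ι → E} {R : ℝ}
    (hx : ∀ i, ‖x i‖ ≤ R) : ∑ i, ‖x i‖ ≤ Fintype.card ι * R := by
  simpa using Finset.sum_le_sum fun i (_ : i ∈ Finset.univ) => hx i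

section Aggregate

variable {ι E : Type*} [Fintype ι] [SeminormedAddCommGroup E] [NormedSpace ℝ E]

/-- The aggregate action `x̄`, the mean of the players' actions. -/
noncomputable def aggregate (x : ι → E) : E := (Fintype.card ι : ℝ)⁻¹ • ∑ i, x i

lemma card_smul_aggregate [Nonempty ι] (x : ι → E) :
    (Fintype.card ι : ℝ) • aggregate x = ∑ i, x i :=
  smul_inv_smul₀ (by simp) _

lemma norm_aggregate_le [Nonempty ι] {x : ι → E} {R : ℝ} (hx : ∀ i, ‖x i‖ ≤ R) :
    ‖aggregate x‖ ≤ R := by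
  rw [aggregate, norm_smul, norm_inv, Real.norm_natCast,
    inv_mul_le_iff₀ (by exact_mod_cast Fintype.card_pos)]
  exact (norm_sum_le _ _).trans (sum_norm_le_card_mul hx)

end Aggregate

section Increments

variable {ι E : Type*} [Fintype ι] [SeminormedAddCommGroup E]

/-- The total increment `Δ(k) = ∑ᵢ ‖xᵢ(k+1) - xᵢ(k)‖` of the players' actions. -/
def totalIncrement (x : ℕ → ι → E) (k : ℕ) : ℝ := ∑ i, ‖x (k + 1) i - x k i‖

lemma totalIncrement_le {x : ℕ → ι → E} {R : ℝ} (hx : ∀ k i, ‖x k i‖ ≤ R) (k : ℕ) :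
    totalIncrement x k ≤ Fintype.card ι * (2 * R) :=
  sum_norm_le_card_mul fun i =>
    (norm_sub_le _ _).trans (by linarith [hx (k + 1) i, hx k i])

lemma tendsto_totalIncrement_zero {G : Type*} [SeminormedAddCommGroup G] {x : ℕ → ι → E}
    {g : ℕ → ι → G} {α : ι → ℕ → ℝ}
    (hα : ∀ i, Tendsto (α i) atTop (𝓝 0)) (hg : ∀ i, ∃ C, ∀ k, ‖g k i‖ ≤ C)
    (hstep : ∀ k i, ‖x (k + 1) i - x k i‖ ≤ α i k * ‖g k i‖) :
    Tendsto (totalIncrement x) atTop (𝓝 0) := by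
  have hincr (i : ι) : Tendsto (fun k => ‖x (k + 1) i - x k i‖) atTop (𝓝 0) := by
    obtain ⟨C, hC⟩ := hg i
    refine squeeze_zero (fun _ => norm_nonneg _) (fun k => hstep k i) ?_
    exact (hα i).zero_mul_isBoundedUnder_le
      (isBoundedUnder_of ⟨C, fun k => by simpa using hC k⟩)
  simpa only [Finset.sum_const_zero] using! tendsto_finsetSum Finset.univ fun i _ => hincr i

end Increments

lemma norm_inv_smul_sub_le {E : Type*} [SeminormedAddCommGroup E] [NormedSpace ℝ E] {b η : ℝ}
    (hη : 0 < η) (hb : η ≤ b) (a m : E) : ‖b⁻¹ • a - m‖ ≤ η⁻¹ * ‖a - b • m‖ := by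
  have hb0 : 0 < b := hη.trans_le hb
  calc ‖b⁻¹ • a - m‖ = b⁻¹ * ‖a - b • m‖ := by
        rw [← norm_smul_of_nonneg (inv_nonneg.2 hb0.le), smul_sub, inv_smul_smul₀ hb0.ne']
    _ ≤ η⁻¹ * ‖a - b • m‖ := by gcongr

/-- The augmented push-sum dynamics tracking the actions `x`: the states of the nodes are indexed
by `Fin N`, the map `e` embeds the players into the nodes, and the nodes outside its range are the
virtual ones. Vectors indexed by players are extended by zero to the virtual nodes. -/
structure AugmentedPushSum {ι E : Type*} {N : ℕ} [AddCommGroup E] [Module ℝ E] (e : ι → Fin N)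
    (A : ℕ → Matrix (Fin N) (Fin N) ℝ) (x z : ℕ → ι → E) (v w : ℕ → Fin N → E)
    (y : ℕ → Fin N → ℝ) : Prop where
  injective : e.Injective
  sum_col : ∀ k j, ∑ i, A k i j = 1
  v_zero : v 0 = e.extend (x 0) 0
  y_zero : y 0 = e.extend (1 : ι → ℝ) 0
  w_succ : ∀ k j, w (k + 1) j = ∑ m, A k j m • v k m
  y_succ : ∀ k j, y (k + 1) j = ∑ m, A k j m * y k m
  z_succ : ∀ k i, z (k + 1) i = (y (k + 1) (e i))⁻¹ • w (k + 1) (e i)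
  v_succ : ∀ k j, v (k + 1) j = w (k + 1) j + e.extend (x (k + 1) - x k) 0 j

namespace AugmentedPushSum

section Algebra

variable {ι E : Type*} {N : ℕ} [AddCommGroup E] [Module ℝ E] {e : ι → Fin N}
  {A : ℕ → Matrix (Fin N) (Fin N) ℝ} {x z : ℕ → ι → E} {v w : ℕ → Fin N → E} {y : ℕ → Fin N → ℝ}

lemma v_succ_eq_averaging (h : AugmentedPushSum e A x z v w y) (k : ℕ) (j : Fin N) :
    v (k + 1) j = ∑ m, A k j m • v k m + e.extend (x (k + 1) - x k) 0 j := by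
  rw [h.v_succ, h.w_succ]

lemma y_succ_eq_averaging (h : AugmentedPushSum e A x z v w y) (k : ℕ) (j : Fin N) :
    y (k + 1) j = ∑ m, A k j m • y k m + (0 : ℕ → Fin N → ℝ) k j := by
  simp [h.y_succ]

lemma of_castLE {n : ℕ} (hnN : n ≤ N) {x z : ℕ → Fin n → E} (hA : ∀ k j, ∑ i, A k i j = 1)
    (hv0p : ∀ i : Fin n, v 0 (Fin.castLE hnN i) = x 0 i)
    (hv0v : ∀ j : Fin N, n ≤ (j : ℕ) → v 0 j = 0)
    (hy0p : ∀ i : Fin n, y 0 (Fin.castLE hnN i) = 1)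
    (hy0v : ∀ j : Fin N, n ≤ (j : ℕ) → y 0 j = 0)
    (hw : ∀ k j, w (k + 1) j = ∑ m, A k j m • v k m)
    (hy : ∀ k j, y (k + 1) j = ∑ m, A k j m * y k m)
    (hz : ∀ k i,
      z (k + 1) i = (y (k + 1) (Fin.castLE hnN i))⁻¹ • w (k + 1) (Fin.castLE hnN i))
    (hv : ∀ k j, v (k + 1) j =
      w (k + 1) j + (if h : (j : ℕ) < n then x (k + 1) ⟨j, h⟩ - x k ⟨j, h⟩ else 0)) :
    AugmentedPushSum (Fin.castLE hnN) A x z v w y where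
  injective := Fin.castLE_injective hnN
  sum_col := hA
  v_zero := eq_extend_castLE_zero hnN hv0p hv0v
  y_zero := eq_extend_castLE_zero hnN hy0p hy0v
  w_succ := hw
  y_succ := hy
  z_succ := hz
  v_succ k j := (hv k j).trans <| congrArg (w (k + 1) j + ·) <| congrFun
    (eq_extend_castLE_zero (f := x (k + 1) - x k)
      (g := fun j => if h : (j : ℕ) < n then x (k + 1) ⟨j, h⟩ - x k ⟨j, h⟩ else 0) hnN
      (fun i => dif_pos i.2) fun _ hj => dif_neg hj.not_gt) j

variable [Fintype ι]

lemma sum_v (h : AugmentedPushSum e A x z v w y) (k : ℕ) : ∑ j, v k j = ∑ i, x k i := by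
  induction k with
  | zero => rw [h.v_zero, sum_function_extend_zero h.injective]
  | succ k ih =>
    rw [sum_averaging_succ h.sum_col h.v_succ_eq_averaging, ih,
      sum_function_extend_zero h.injective, ← Finset.sum_add_distrib]
    simp

lemma sum_y (h : AugmentedPushSum e A x z v w y) (k : ℕ) : ∑ j, y k j = Fintype.card ι := by
  induction k with
  | zero => simp [h.y_zero, sum_function_extend_zero h.injective]
  | succ k ih => simpa [ih] using sum_averaging_succ h.sum_col h.y_succ_eq_averaging k

end Algebra

variable {ι E : Type*} {N : ℕ} [Fintype ι] [SeminormedAddCommGroup E] [NormedSpace ℝ E]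
  {e : ι → Fin N} {A : ℕ → Matrix (Fin N) (Fin N) ℝ} {x z : ℕ → ι → E} {v w : ℕ → Fin N → E}
  {y : ℕ → Fin N → ℝ} {φ : ℕ → Fin N → ℝ} {c : ℕ → ℝ} {R η : ℝ}

lemma norm_w_sub_le (h : AugmentedPushSum e A x z v w y) (herg : ErgodicAtRate A φ c) (k : ℕ)
    (j : Fin N) :
    ‖w (k + 1) j - φ k j • ∑ i, x k i‖ ≤
      c k * ∑ i, ‖x 0 i‖ + ∑ s ∈ Finset.range k, c s * totalIncrement x (k - 1 - s) := by
  simpa only [h.sum_v, ← h.w_succ, h.v_zero, sum_norm_function_extend_zero h.injective,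
    Pi.sub_apply, totalIncrement] using
    herg.norm_averaging_sub_le h.sum_col h.v_succ_eq_averaging k j

lemma abs_y_sub_le (h : AugmentedPushSum e A x z v w y) (herg : ErgodicAtRate A φ c) (k : ℕ)
    (j : Fin N) : |y (k + 1) j - φ k j * Fintype.card ι| ≤ c k * Fintype.card ι := by
  have hy0 : ∑ j, ‖y 0 j‖ = Fintype.card ι := by
    simp [h.y_zero, sum_norm_function_extend_zero h.injective, -Real.norm_eq_abs]
  simpa [h.sum_y, ← h.y_succ, ← hy0] using
    herg.norm_averaging_sub_le h.sum_col h.y_succ_eq_averaging k j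

lemma norm_estimate_sub_aggregate_le (h : AugmentedPushSum e A x z v w y)
    (herg : ErgodicAtRate A φ c) (hη : 0 < η) (hy : ∀ i k, 1 ≤ k → η ≤ y k (e i))
    (hx : ∀ k i, ‖x k i‖ ≤ R) (k : ℕ) (i : ι) :
    ‖z (k + 1) i - aggregate (x k)‖ ≤
      η⁻¹ * (c k * (Fintype.card ι * (2 * R)) +
        ∑ s ∈ Finset.range k, c s * totalIncrement x (k - 1 - s)) := by
  have : Nonempty ι := ⟨i⟩
  have hc := herg.rate_nonneg (e i) k
  set conv := ∑ s ∈ Finset.range k, c s * totalIncrement x (k - 1 - s)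
  have hw : ‖w (k + 1) (e i) - φ k (e i) • ∑ j, x k j‖ ≤ c k * (Fintype.card ι * R) + conv :=
    (h.norm_w_sub_le herg k (e i)).trans (by gcongr; exact sum_norm_le_card_mul (hx 0))
  have hyx : ‖(y (k + 1) (e i) - φ k (e i) * Fintype.card ι) • aggregate (x k)‖ ≤
      c k * Fintype.card ι * R := by
    rw [norm_smul]
    gcongr
    exacts [h.abs_y_sub_le herg k (e i), norm_aggregate_le (hx k)]
  have hcancel : w (k + 1) (e i) - y (k + 1) (e i) • aggregate (x k) =
      (w (k + 1) (e i) - φ k (e i) • ∑ j, x k j) -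
        (y (k + 1) (e i) - φ k (e i) * Fintype.card ι) • aggregate (x k) := by
    rw [sub_smul, mul_smul, card_smul_aggregate]
    abel
  rw [h.z_succ]
  refine (norm_inv_smul_sub_le hη (hy i _ k.succ_pos) _ _).trans ?_
  gcongr
  rw [hcancel]
  linarith [norm_sub_le_of_le hw hyx]

lemma norm_estimate_le (h : AugmentedPushSum e A x z v w y) (hc : Summable c)
    (herg : ErgodicAtRate A φ c) (hη : 0 < η) (hy : ∀ i k, 1 ≤ k → η ≤ y k (e i))
    (hx : ∀ k i, ‖x k i‖ ≤ R) (k : ℕ) (i : ι) :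
    ‖z (k + 1) i‖ ≤ η⁻¹ * (2 * ((∑' s, c s) * (Fintype.card ι * (2 * R)))) + R := by
  have : Nonempty ι := ⟨i⟩
  have hc0 := herg.rate_nonneg (e i)
  have hR : 0 ≤ R := (norm_nonneg _).trans (hx 0 i)
  have hck : c k ≤ ∑' s, c s := hc.le_tsum k fun s _ => hc0 s
  have hconv := sum_range_mul_reflect_le hc hc0 (totalIncrement_le hx) (by positivity) k
  calc ‖z (k + 1) i‖ ≤ ‖z (k + 1) i - aggregate (x k)‖ + ‖aggregate (x k)‖ :=
        norm_le_norm_sub_add _ _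
    _ ≤ _ := add_le_add (h.norm_estimate_sub_aggregate_le herg hη hy hx k i)
        (norm_aggregate_le (hx k))
    _ ≤ _ := by
        rw [two_mul (_ * _)]
        gcongr

lemma tendsto_norm_estimate_sub_aggregate (h : AugmentedPushSum e A x z v w y) (hc : Summable c)
    (herg : ErgodicAtRate A φ c) (hη : 0 < η) (hy : ∀ i k, 1 ≤ k → η ≤ y k (e i))
    (hx : ∀ k i, ‖x k i‖ ≤ R) (hΔ : Tendsto (totalIncrement x) atTop (𝓝 0)) (i : ι) :
    Tendsto (fun k => ‖z (k + 1) i - aggregate (x k)‖) atTop (𝓝 0) := by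
  refine squeeze_zero (fun _ => norm_nonneg _)
    (fun k => h.norm_estimate_sub_aggregate_le herg hη hy hx k i) ?_
  simpa using ((hc.tendsto_atTop_zero.mul_const _).add
    (tendsto_sum_range_mul_reflect_zero hc hΔ)).const_mul η⁻¹

end AugmentedPushSum

section StepSizes

lemma tendsto_atTop_of_monotone_of_exists_lt_succ {l : ℕ → ℕ} (hl : Monotone l)
    (h : ∀ k, ∃ u ≥ k, l u < l (u + 1)) : Tendsto l atTop atTop := by
  refine tendsto_atTop_atTop_of_monotone hl fun b => ?_
  induction b with
  | zero => exact ⟨0, Nat.zero_le _⟩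
  | succ b ih =>
    obtain ⟨a, ha⟩ := ih
    obtain ⟨u, hau, hu⟩ := h a
    exact ⟨u + 1, (ha.trans (hl hau)).trans_lt hu⟩

lemma tendsto_sum_Ico_zero {κ : Type*} {f : Filter κ} {ρ : ℕ → ℝ} {l m : κ → ℕ} {σ : ℕ}
    (hρ0 : ∀ t, 0 ≤ ρ t) (hρ : Tendsto ρ atTop (𝓝 0)) (hl : Tendsto l f atTop)
    (hm : ∀ k, m k ≤ l k + σ) :
    Tendsto (fun k => ∑ t ∈ Finset.Ico (l k) (m k), ρ t) f (𝓝 0) := by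
  have hwindow : Tendsto (fun k => ∑ s ∈ Finset.range σ, ρ (l k + s)) f (𝓝 0) := by
    simpa only [Finset.sum_const_zero] using! tendsto_finsetSum (Finset.range σ) fun s _ =>
      hρ.comp (tendsto_atTop_mono (fun k => (l k).le_add_right s) hl)
  refine squeeze_zero (fun k => Finset.sum_nonneg fun t _ => hρ0 t) (fun k => ?_) hwindow
  rw [Finset.sum_Ico_eq_sum_range]
  exact Finset.sum_le_sum_of_subset_of_nonneg
    (Finset.range_subset_range.2 (Nat.sub_le_iff_le_add'.2 (hm k))) fun _ _ _ => hρ0 _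

lemma tendsto_zero_of_summable_sq {ρ : ℕ → ℝ} (hρ : Summable fun t => ρ t ^ 2) :
    Tendsto ρ atTop (𝓝 0) := by
  rw [tendsto_zero_iff_abs_tendsto_zero]
  simpa [Real.sqrt_sq_eq_abs, Function.comp_def] using hρ.tendsto_atTop_zero.sqrt

lemma tendsto_stepsize_zero {P : ℕ → Prop} {l : ℕ → ℕ} {σ : ℕ} {ρ α : ℕ → ℝ}
    (hP : ∀ k, ∃ u ≥ k, P u) (hact : ∀ k, P k → l k + 1 ≤ l (k + 1) ∧ l (k + 1) ≤ l k + σ)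
    (hstay : ∀ k, ¬ P k → l (k + 1) = l k) (hρ0 : ∀ t, 0 ≤ ρ t)
    (hρ : Tendsto ρ atTop (𝓝 0)) (hα : ∀ k, α k = ∑ t ∈ Finset.Ico (l k) (l (k + 1)), ρ t) :
    Tendsto α atTop (𝓝 0) := by
  have hlstep (k : ℕ) : l k ≤ l (k + 1) ∧ l (k + 1) ≤ l k + σ := by
    by_cases hk : P k
    · exact (hact k hk).imp_left Nat.le_of_succ_le
    · simp [hstay k hk]
  have hl : Tendsto l atTop atTop :=
    tendsto_atTop_of_monotone_of_exists_lt_succ (monotone_nat_of_le_succ fun k => (hlstep k).1)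
      fun k => (hP k).imp fun u hu => ⟨hu.1, (hact u hu.2).1⟩
  rw [funext hα]
  exact tendsto_sum_Ico_zero hρ0 hρ hl fun k => (hlstep k).2

end StepSizes

lemma forall_mem_of_asynchronous_update {ι E : Type*} {X : ι → Set E} {x : ℕ → ι → E}
    {P : ℕ → ι → Prop} (h0 : ∀ i, x 0 i ∈ X i) (hact : ∀ k i, P k i → x (k + 1) i ∈ X i)
    (hstay : ∀ k i, ¬ P k i → x (k + 1) i = x k i) (k : ℕ) (i : ι) : x k i ∈ X i := by
  induction k with
  | zero => exact h0 i
  | succ k ih =>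
    by_cases hi : P k i
    · exact hact k i hi
    · exact hstay k i hi ▸ ih

lemma norm_sub_le_two_mul_of_norm_sub_sub_le {E : Type*} [SeminormedAddCommGroup E] {a b g : E}
    (h : ‖a - g - b‖ ≤ ‖a - g - a‖) : ‖b - a‖ ≤ 2 * ‖g‖ := by
  have hg : ‖a - g - b‖ ≤ ‖g‖ := by simpa using h
  calc ‖b - a‖ = ‖a - g - b + g‖ := by rw [norm_sub_rev]; congr 1; abel
    _ ≤ 2 * ‖g‖ := by linarith [norm_add_le (a - g - b) g]

lemma exists_norm_le_of_lipschitz {E E' G : Type*} [SeminormedAddCommGroup E]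
    [SeminormedAddCommGroup E'] [SeminormedAddCommGroup G] {F : E → E' → G} {L : ℝ}
    (hF : ∀ a a' b b', ‖F a b - F a' b'‖ ≤ L * √(‖a - a'‖ ^ 2 + ‖b - b'‖ ^ 2)) (r : ℝ) :
    ∃ C, ∀ a b, ‖a‖ ≤ r → ‖b‖ ≤ r → ‖F a b‖ ≤ C := by
  refine ⟨|L| * √(r ^ 2 + r ^ 2) + ‖F 0 0‖, fun a b ha hb => ?_⟩
  have hsub : ‖F a b - F 0 0‖ ≤ |L| * √(r ^ 2 + r ^ 2) :=
    calc ‖F a b - F 0 0‖ ≤ L * √(‖a‖ ^ 2 + ‖b‖ ^ 2) := by simpa using hF a 0 b 0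
      _ ≤ |L| * √(r ^ 2 + r ^ 2) := by gcongr; exact le_abs_self L
  exact (norm_le_norm_sub_add _ _).trans (by gcongr)

lemma AugmentedPushSum.tendsto_norm_estimate_sub_aggregate_of_norm_sub_le {ι E : Type*} [Fintype ι]
    [SeminormedAddCommGroup E] [NormedSpace ℝ E] {N : ℕ} {e : ι → Fin N}
    {A : ℕ → Matrix (Fin N) (Fin N) ℝ} {x z : ℕ → ι → E} {v w : ℕ → Fin N → E}
    {y : ℕ → Fin N → ℝ} (h : AugmentedPushSum e A x z v w y) {R : ℝ} (hx : ∀ k i, ‖x k i‖ ≤ R)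
    {G : Type*} [SeminormedAddCommGroup G] {F : ι → E → E → G}
    (hF : ∀ i r, ∃ C, ∀ a b, ‖a‖ ≤ r → ‖b‖ ≤ r → ‖F i a b‖ ≤ C)
    {α : ι → ℕ → ℝ} (hα : ∀ i, Tendsto (α i) atTop (𝓝 0))
    (hstep : ∀ k i, ‖x (k + 1) i - x k i‖ ≤ α i k * ‖F i (x k i) (z (k + 1) i)‖)
    {φ : ℕ → Fin N → ℝ} {c : ℕ → ℝ} (hc : Summable c) (herg : ErgodicAtRate A φ c)
    {η : ℝ} (hη : 0 < η) (hy : ∀ i k, 1 ≤ k → η ≤ y k (e i)) (i : ι) :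
    Tendsto (fun k => ‖z (k + 1) i - aggregate (x k)‖) atTop (𝓝 0) := by
  have hz := h.norm_estimate_le hc herg hη hy hx
  have hFb (j : ι) : ∃ C, ∀ k, ‖F j (x k j) (z (k + 1) j)‖ ≤ C := by
    obtain ⟨C, hC⟩ := hF j (max R _)
    exact ⟨C, fun k => hC _ _ (le_max_of_le_left (hx k j)) (le_max_of_le_right (hz k j))⟩
  exact h.tendsto_norm_estimate_sub_aggregate hc herg hη hy hx
    (tendsto_totalIncrement_zero hα hFb hstep) i

theorem pushsum_consensus_tendsto_zero_general {ι E : Type*} [Fintype ι]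
    [SeminormedAddCommGroup E] [NormedSpace ℝ E] {N : ℕ} {e : ι → Fin N}
    {A : ℕ → Matrix (Fin N) (Fin N) ℝ} {x z : ℕ → ι → E} {v w : ℕ → Fin N → E}
    {y : ℕ → Fin N → ℝ} (hpush : AugmentedPushSum e A x z v w y)
    {X : ι → Set E} (hX : ∀ i, Bornology.IsBounded (X i))
    {F : ι → E → E → E} (hF : ∀ i r, ∃ C, ∀ a b, ‖a‖ ≤ r → ‖b‖ ≤ r → ‖F i a b‖ ≤ C)
    {active : ℕ → Set ι} (hactive : ∀ k i, ∃ u ≥ k, i ∈ active u)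
    {l : ι → ℕ → ℕ} {σ : ℕ}
    (hlact : ∀ i k, i ∈ active k → l i k + 1 ≤ l i (k + 1) ∧ l i (k + 1) ≤ l i k + σ)
    (hlstay : ∀ i k, i ∉ active k → l i (k + 1) = l i k)
    {ρ : ℕ → ℝ} (hρ0 : ∀ t, 0 ≤ ρ t) (hρ : Tendsto ρ atTop (𝓝 0))
    {α : ι → ℕ → ℝ} (hα : ∀ i k, α i k = ∑ t ∈ Finset.Ico (l i k) (l i (k + 1)), ρ t)
    (hx0 : ∀ i, x 0 i ∈ X i)
    (hxact : ∀ k i, i ∈ active k → x (k + 1) i ∈ X i ∧ ∀ u ∈ X i,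
      ‖x k i - α i k • F i (x k i) (z (k + 1) i) - x (k + 1) i‖ ≤
        ‖x k i - α i k • F i (x k i) (z (k + 1) i) - u‖)
    (hxstay : ∀ k i, i ∉ active k → x (k + 1) i = x k i)
    {φ : ℕ → Fin N → ℝ} {c : ℕ → ℝ} (hc : Summable c) (herg : ErgodicAtRate A φ c)
    {η : ℝ} (hη : 0 < η) (hy : ∀ i k, 1 ≤ k → η ≤ y k (e i)) (i : ι) :
    Tendsto (fun k => ‖z (k + 1) i - aggregate (x k)‖) atTop (𝓝 0) := by
  have hxX := forall_mem_of_asynchronous_update (P := fun k i => i ∈ active k) hx0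
    (fun k i hi => (hxact k i hi).1) hxstay
  obtain ⟨R, hR⟩ := (Bornology.isBounded_iUnion.2 hX).exists_norm_le
  have hxR (k : ℕ) (j : ι) : ‖x k j‖ ≤ R := hR _ (Set.mem_iUnion_of_mem j (hxX k j))
  have hα0 (j : ι) (k : ℕ) : 0 ≤ α j k := hα j k ▸ Finset.sum_nonneg fun t _ => hρ0 t
  have hαlim (j : ι) : Tendsto (α j) atTop (𝓝 0) :=
    tendsto_stepsize_zero (hactive · j) (hlact j) (hlstay j) hρ0 hρ (hα j)
  have hstep (k : ℕ) (j : ι) :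
      ‖x (k + 1) j - x k j‖ ≤ 2 * α j k * ‖F j (x k j) (z (k + 1) j)‖ := by
    by_cases hj : j ∈ active k
    · rw [mul_assoc, ← norm_smul_of_nonneg (hα0 j k)]
      exact norm_sub_le_two_mul_of_norm_sub_sub_le ((hxact k j hj).2 _ (hxX k j))
    · have := hα0 j k
      rw [hxstay k j hj, sub_self, norm_zero]
      positivity
  exact hpush.tendsto_norm_estimate_sub_aggregate_of_norm_sub_le hxR hF
    (fun j => by simpa using (hαlim j).const_mul 2) hstep hc herg hη hy i

/-- Lemma 2(b): under the augmented push-sum dynamics with the ergodicity hypothesis,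
each player's local estimate `z_i(k+1)` asymptotically tracks the aggregate action
`x̄(k)`. -/
theorem pushsum_consensus_tendsto_zero
    (n N p : ℕ) (hn : 0 < n) (hnN : n ≤ N)
    (X : Fin n → Set (EuclideanSpace ℝ (Fin p)))
    -- nonempty convex compact action sets
    (hXne : ∀ i, (X i).Nonempty)
    (hXconv : ∀ i, Convex ℝ (X i))
    (hXcomp : ∀ i, IsCompact (X i))
    -- the game mappings, L-Lipschitz on ℝ^p × ℝ^p
    (F : Fin n → EuclideanSpace ℝ (Fin p) → EuclideanSpace ℝ (Fin p) →
      EuclideanSpace ℝ (Fin p))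
    (L : ℝ) (hLpos : 0 < L)
    (hFlip : ∀ i xi xi' z z',
      ‖F i xi z - F i xi' z'‖ ≤ L * Real.sqrt (‖xi - xi'‖ ^ 2 + ‖z - z'‖ ^ 2))
    -- nonnegative column-stochastic matrices
    (A : ℕ → Matrix (Fin N) (Fin N) ℝ)
    (hAnn : ∀ k i j, 0 ≤ A k i j)
    (hAcol : ∀ k j, ∑ i, A k i j = 1)
    -- states
    (v w : ℕ → Fin N → EuclideanSpace ℝ (Fin p))
    (y : ℕ → Fin N → ℝ)
    (x z : ℕ → Fin n → EuclideanSpace ℝ (Fin p))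
    -- initialization
    (hx0 : ∀ i, x 0 i ∈ X i)
    (hv0p : ∀ i : Fin n, v 0 (Fin.castLE hnN i) = x 0 i)
    (hy0p : ∀ i : Fin n, y 0 (Fin.castLE hnN i) = 1)
    (hv0v : ∀ j : Fin N, n ≤ (j : ℕ) → v 0 j = 0)
    (hy0v : ∀ j : Fin N, n ≤ (j : ℕ) → y 0 j = 0)
    -- activation sets
    (Aset : ℕ → Finset (Fin n))
    (hAsetne : ∀ k, (Aset k).Nonempty)
    (σ1 : ℕ) (hσ1 : 1 ≤ σ1)
    (hcover : ∀ k, ∀ i : Fin n, ∃ u, k + 1 ≤ u ∧ u ≤ k + σ1 ∧ i ∈ Aset u)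
    -- counters
    (l : Fin n → ℕ → ℕ) (σ2 : ℕ) (hσ2 : 1 ≤ σ2)
    (hl0 : ∀ i, l i 0 = 0)
    (hlact : ∀ i k, i ∈ Aset k → l i k + 1 ≤ l i (k + 1) ∧ l i (k + 1) ≤ l i k + σ2)
    (hlstay : ∀ i k, i ∉ Aset k → l i (k + 1) = l i k)
    -- stepsize generating sequence
    (ρ : ℕ → ℝ)
    (hρpos : ∀ t, 0 < ρ t)
    (hρmono : ∀ t, ρ (t + 1) ≤ ρ t)
    (hρsq : Summable fun t => ρ t ^ 2)
    (α : Fin n → ℕ → ℝ)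
    (hα : ∀ i k, α i k = ∑ t ∈ Finset.Ico (l i k) (l i (k + 1)), ρ t)
    -- push-sum dynamics
    (hw : ∀ k, ∀ j : Fin N, w (k + 1) j = ∑ m, A k j m • v k m)
    (hy : ∀ k, ∀ j : Fin N, y (k + 1) j = ∑ m, A k j m * y k m)
    (hz : ∀ k, ∀ i : Fin n,
      z (k + 1) i = (y (k + 1) (Fin.castLE hnN i))⁻¹ • w (k + 1) (Fin.castLE hnN i))
    -- the projected pseudo-gradient update for active players
    (hxup : ∀ k, ∀ i : Fin n, i ∈ Aset k →
      x (k + 1) i ∈ X i ∧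
      ∀ u ∈ X i,
        ‖x k i - α i k • F i (x k i) (z (k + 1) i) - x (k + 1) i‖ ≤
        ‖x k i - α i k • F i (x k i) (z (k + 1) i) - u‖)
    (hxstay : ∀ k, ∀ i : Fin n, i ∉ Aset k → x (k + 1) i = x k i)
    (hv : ∀ k, ∀ j : Fin N, v (k + 1) j =
      w (k + 1) j + (if h : (j : ℕ) < n then x (k + 1) ⟨j, h⟩ - x k ⟨j, h⟩ else 0))
    -- ergodicity hypothesis
    (B' lam η : ℝ) (hB' : 0 < B') (hlam : lam ∈ Set.Ioo (0 : ℝ) 1)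
    (hη : η ∈ Set.Ioc (0 : ℝ) 1)
    (φvec : ℕ → Fin N → ℝ)
    (hφnn : ∀ k i, 0 ≤ φvec k i)
    (hφsum : ∀ k, ∑ i, φvec k i = 1)
    (herg : ∀ k t, t ≤ k → ∀ i j : Fin N, |backProd A k t i j - φvec k i| ≤ B' * lam ^ t)
    (hylb : ∀ i : Fin n, ∀ k, 1 ≤ k → η ≤ y k (Fin.castLE hnN i)) :
    ∀ i : Fin n,
      Tendsto (fun k => ‖z (k + 1) i - (n : ℝ)⁻¹ • ∑ j, x k j‖) atTop (nhds 0) := by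
  simpa [aggregate] using pushsum_consensus_tendsto_zero_general
    (AugmentedPushSum.of_castLE hnN hAcol hv0p hv0v hy0p hy0v hw hy hz hv)
    (fun i => (hXcomp i).isBounded) (fun i => exists_norm_le_of_lipschitz (hFlip i))
    (active := fun k => Aset k)
    (fun k i => (hcover k i).imp fun u hu => ⟨by lia, hu.2.2⟩) hlact hlstay
    (fun t => (hρpos t).le) (tendsto_zero_of_summable_sq hρsq) hα hx0 hxup hxstay
    ((summable_geometric_of_lt_one hlam.1.le hlam.2).mul_left B') herg hη.1 hylb
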